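/- For every real number λ and every positive integer k, ℰ_{k,λ} = −(1)_{k,λ} + Σ_{l=0}^{k−1} C(k,l)(−1)^{k+l}(1)_{l,λ}·ℰ_{k−l,−λ}. -/

import Mathlib

/-!
Write `F x = Σ (x)_{n,λ} tⁿ/n!` (formally `(1+λt)^{x/λ}`), `E = Σ ℰ_{n,λ} tⁿ/n!` and
`G = Σ (-1)ⁿ ℰ_{n,-λ} tⁿ/n!`. The recursion for the degenerate Euler numbers says `E (F 1 + 1) = 2`,
and, since `(-1)ⁿ (1)_{n,-λ} = (-1)_{n,λ}`, also `G (F (-1) + 1) = 2`. The differential equation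
`(1+λt) (F x)' = x F x` gives `F 1 * F (-1) = 1`. Hence `F 1 * G = 2 F 1 - 2 + E`, and the
coefficient of `t^k`, `k ≥ 1`, is the claimed identity: the term `l = k` on the left is `(1)_{k,λ}`.
-/


open Finset

/-- λ-falling factorial: `(x)_{n,λ} = x(x-λ)⋯(x-(n-1)λ)`. -/
noncomputable def fallFac (lam x : ℝ) : ℕ → ℝ
  | 0 => 1
  | n + 1 => fallFac lam x n * (x - n * lam)

/-- Degenerate Euler numbers, defined by `ℰ_{0,λ}=1` and
`Σ_{l=0}^{n} C(n,l) ℰ_{l,λ} (1)_{n-l,λ} + ℰ_{n,λ} = 0` for `n ≥ 1`. -/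
noncomputable def degE (lam : ℝ) : ℕ → ℝ
  | 0 => 1
  | n + 1 => -(1/2) * ∑ l ∈ (Finset.range (n+1)).attach,
      ((n+1).choose l.1 : ℝ) * degE lam l.1 * fallFac lam 1 (n + 1 - l.1)
  decreasing_by exact Finset.mem_range.mp l.2

/-- Degenerate Euler polynomials `ℰ_{n,λ}(x) = Σ_{l=0}^n C(n,l) ℰ_{l,λ} (x)_{n-l,λ}`. -/
noncomputable def degEP (lam x : ℝ) (n : ℕ) : ℝ :=
  ∑ l ∈ Finset.range (n + 1), (n.choose l : ℝ) * degE lam l * fallFac lam x (n - l)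

/-- Degenerate Bernstein polynomials `B_{k,n}(x|λ)` (vanishing for `k > n`). -/
noncomputable def bern (lam x : ℝ) (k n : ℕ) : ℝ :=
  (n.choose k : ℝ) * fallFac lam x k * fallFac lam (1 - x) (n - k)

/-- Two variable degenerate Bernstein polynomials `B_{k,n}(x₁,x₂|λ)`. -/
noncomputable def bern2 (lam x1 x2 : ℝ) (k n : ℕ) : ℝ :=
  (n.choose k : ℝ) * fallFac lam x1 k * fallFac lam (1 - x2) (n - k)

/-- Higher order degenerate Euler polynomials `ℰ^{(k)}_{n,λ}(x)`. -/
noncomputable def degEPk (lam : ℝ) : ℕ → ℕ → ℝ → ℝ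
  | 0, n, x => fallFac lam x n
  | k + 1, n, x => ∑ m ∈ Finset.range (n + 1),
      (n.choose m : ℝ) * degE lam m * degEPk lam k (n - m) x

/-- The exponential generating series `Σ a n tⁿ / n!` of a real sequence. -/
noncomputable def egf (a : ℕ → ℝ) : PowerSeries ℝ := PowerSeries.mk fun n => a n / n.factorial

lemma coeff_egf (a : ℕ → ℝ) (n : ℕ) : PowerSeries.coeff n (egf a) = a n / n.factorial := by
  simp [egf]

lemma coeff_egf_mul (a b : ℕ → ℝ) (n : ℕ) :
    PowerSeries.coeff n (egf a * egf b) =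
      (∑ l ∈ Finset.range (n + 1), (n.choose l : ℝ) * a l * b (n - l)) / n.factorial := by
  rw [PowerSeries.coeff_mul, Finset.Nat.sum_antidiagonal_eq_sum_range_succ_mk, Finset.sum_div]
  refine Finset.sum_congr rfl fun l hl => ?_
  have hl' : l ≤ n := Nat.lt_succ_iff.mp (Finset.mem_range.mp hl)
  rw [coeff_egf, coeff_egf, Nat.cast_choose ℝ hl']
  have h1 : (l.factorial : ℝ) ≠ 0 := by positivity
  have h2 : ((n - l).factorial : ℝ) ≠ 0 := by positivity
  have h3 : (n.factorial : ℝ) ≠ 0 := by positivity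
  field_simp

lemma degE_rec (lam : ℝ) (n : ℕ) (hn : 0 < n) :
    ∑ l ∈ Finset.range (n + 1), (n.choose l : ℝ) * degE lam l * fallFac lam 1 (n - l)
      + degE lam n = 0 := by
  obtain ⟨m, rfl⟩ : ∃ m, n = m + 1 := ⟨n - 1, by omega⟩
  have h : degE lam (m + 1) = -(1/2) * ∑ l ∈ Finset.range (m + 1),
      ((m + 1).choose l : ℝ) * degE lam l * fallFac lam 1 (m + 1 - l) := by
    rw [degE, ← Finset.sum_attach (Finset.range (m + 1))]
  rw [Finset.sum_range_succ]
  simp only [Nat.choose_self, Nat.sub_self, fallFac]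
  push_cast
  linarith

lemma egf_degE_mul (lam : ℝ) : egf (degE lam) * (egf (fallFac lam 1) + 1) = 2 := by
  ext n
  rw [mul_add, mul_one, map_add, coeff_egf_mul, coeff_egf, ← add_div]
  rcases Nat.eq_zero_or_pos n with rfl | hn
  · have h2 : (2 : PowerSeries ℝ) = PowerSeries.C 2 := (map_ofNat PowerSeries.C 2).symm
    rw [h2, PowerSeries.coeff_C]
    norm_num [degE, fallFac]
  · have h2 : (2 : PowerSeries ℝ) = PowerSeries.C 2 := (map_ofNat PowerSeries.C 2).symm
    rw [degE_rec lam n hn, h2, PowerSeries.coeff_C, if_neg hn.ne', zero_div]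

lemma fallFac_neg (lam : ℝ) (n : ℕ) :
    (-1 : ℝ) ^ n * fallFac (-lam) 1 n = fallFac lam (-1) n := by
  induction n with
  | zero => simp [fallFac]
  | succ n ih => rw [fallFac, fallFac, ← ih]; ring

lemma rescale_egf (a : ℕ → ℝ) :
    PowerSeries.rescale (-1 : ℝ) (egf a) = egf fun n => (-1) ^ n * a n := by
  ext n
  rw [PowerSeries.coeff_rescale, coeff_egf, coeff_egf, mul_div_assoc]

/-- The relation of `egf_degE_mul` at parameter `-λ`, after the substitution `t ↦ -t`. -/
lemma egf_degE_neg_mul (lam : ℝ) :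
    (egf fun n => (-1) ^ n * degE (-lam) n) * (egf (fallFac lam (-1)) + 1) = 2 := by
  have h := congrArg (PowerSeries.rescale (-1 : ℝ)) (egf_degE_mul (-lam))
  rw [map_mul, map_add, map_one, rescale_egf, rescale_egf, map_ofNat] at h
  simpa only [fallFac_neg] using h

/-- The differential equation of `(1 + λt)^{x/λ}`. -/
lemma egf_fallFac_ode (lam x : ℝ) :
    (1 + PowerSeries.C lam * PowerSeries.X) *
      PowerSeries.derivative ℝ (egf (fallFac lam x)) =
      PowerSeries.C x * egf (fallFac lam x) := by
  ext n
  rw [add_mul, one_mul, mul_assoc, map_add, PowerSeries.coeff_C_mul, PowerSeries.coeff_C_mul,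
    PowerSeries.coeff_derivative, coeff_egf, coeff_egf]
  have h0 : (n.factorial : ℝ) ≠ 0 := by positivity
  have h1 : (n : ℝ) + 1 ≠ 0 := by positivity
  cases n with
  | zero => simp [fallFac]
  | succ n =>
    rw [PowerSeries.coeff_succ_X_mul, PowerSeries.coeff_derivative, coeff_egf]
    rw [fallFac, Nat.factorial_succ (n + 1)]
    have h2 : (n : ℝ) + 1 ≠ 0 := by positivity
    push_cast at *
    field_simp
    ring

lemma egf_fallFac_mul_neg (lam : ℝ) :
    egf (fallFac lam 1) * egf (fallFac lam (-1)) = 1 := by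
  apply PowerSeries.derivative.ext
  · have hne : (1 + PowerSeries.C lam * PowerSeries.X : PowerSeries ℝ) ≠ 0 := fun h => by
      simpa using congrArg PowerSeries.constantCoeff h
    apply mul_left_cancel₀ hne
    have h1 := egf_fallFac_ode lam 1
    have h2 := egf_fallFac_ode lam (-1)
    rw [map_neg, map_one] at h2
    rw [map_one] at h1
    rw [Derivation.leibniz, Derivation.map_one_eq_zero, smul_eq_mul, smul_eq_mul]
    linear_combination egf (fallFac lam (-1)) * h1 + egf (fallFac lam 1) * h2
  · simp [← PowerSeries.coeff_zero_eq_constantCoeff_apply, PowerSeries.coeff_mul, coeff_egf,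
      fallFac]

lemma egf_key (lam : ℝ) :
    egf (fallFac lam 1) * (egf fun n => (-1) ^ n * degE (-lam) n) =
      egf (fallFac lam 1) + egf (fallFac lam 1) - 2 + egf (degE lam) := by
  have hE := egf_degE_mul lam
  have hG := egf_degE_neg_mul lam
  have hF := egf_fallFac_mul_neg lam
  have hne : egf (fallFac lam 1) + 1 ≠ 0 := fun h => by
    rw [h, mul_zero] at hE
    have h2 := congrArg PowerSeries.constantCoeff hE
    rw [map_zero, map_ofNat] at h2
    norm_num at h2
  apply mul_left_cancel₀ hne
  linear_combination egf (fallFac lam 1) ^ 2 * hG - hE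
    - egf (fallFac lam 1) * (egf fun n => (-1) ^ n * degE (-lam) n) * hF

/-- Corollary 2.11: `ℰ_{k,λ} = -(1)_{k,λ} + Σ_{l=0}^{k-1} C(k,l)(-1)^{k+l}(1)_{l,λ}ℰ_{k-l,-λ}`. -/
theorem degE_identity' (lam : ℝ) (k : ℕ) (hk : 0 < k) :
    degE lam k =
      -fallFac lam 1 k +
        ∑ l ∈ Finset.range k, (k.choose l : ℝ) * (-1 : ℝ) ^ (k + l) * fallFac lam 1 l *
          degE (-lam) (k - l) := by
  have h := congrArg (PowerSeries.coeff k) (egf_key lam)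
  have h2 : (2 : PowerSeries ℝ) = PowerSeries.C 2 := (map_ofNat PowerSeries.C 2).symm
  have h0 : (k.factorial : ℝ) ≠ 0 := by positivity
  rw [coeff_egf_mul, map_add, map_sub, map_add, h2, PowerSeries.coeff_C, if_neg hk.ne', coeff_egf,
    coeff_egf, sub_zero, ← add_div, ← add_div, div_left_inj' h0, Finset.sum_range_succ] at h
  have hs : ∑ l ∈ Finset.range k, (k.choose l : ℝ) * (-1 : ℝ) ^ (k + l) * fallFac lam 1 l *
        degE (-lam) (k - l) = ∑ l ∈ Finset.range k, (k.choose l : ℝ) * fallFac lam 1 l *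
        ((-1) ^ (k - l) * degE (-lam) (k - l)) := by
    refine Finset.sum_congr rfl fun l hl => ?_
    have hl' : k + l = (k - l) + 2 * l := by have := Finset.mem_range.mp hl; omega
    rw [hl', pow_add, pow_mul]
    norm_num
    ring
  simp only [Nat.choose_self, Nat.sub_self, degE, Nat.cast_one, pow_zero] at h
  rw [hs]
  linarith
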